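/- Assume additionally: every e_j has a continuous representative on [0,L] with sup_j ‖e_j‖_∞ ≤ M for some M > 0; there are constants c > 0, c₁ > 0 with ‖e_j − e_j'‖_∞ ≤ c/j and λ_j ≥ c₁·j² for all j ≥ 1; and there is an integer D ≥ 1 with b_n = e_n' for all n > D. Fix x₀ ∈ (0,L) and for small ε > 0 let f_ε := (1/ε)·𝟙_{[x₀−ε/2, x₀+ε/2]} ∈ L²(0,L). Then lim_{ε→0⁺} ⟨V∞ f_ε, f_ε⟩ = σ² Σ_{j₁=1}^∞ Σ_{j₂=1}^∞ [e_{j₁}(x₀)·e_{j₂}(x₀) / (λ_{j₁} + λ_{j₂} − 2α)] · (Σ_{n=1}^∞ q_n ⟨e_{j₁}, b_n⟩ ⟨e_{j₂}, b_n⟩), all series converging. (This is the paper's Corollary 3.3, the pointwise early-warning sign.) -/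

import Mathlib

open scoped RealInnerProductSpace
open MeasureTheory Filter

/-- The Hilbert space `H := L²(0,L)`. -/
abbrev HL (L : ℝ) : Type := Lp ℝ 2 (volume.restrict (Set.Icc (0:ℝ) L))

/-- The Dirichlet eigenfunctions of the Laplacian, `e'_{k+1}(x) = √(2/L)·sin(π(k+1)x/L)`. -/
noncomputable def sineEF (L : ℝ) (k : ℕ) (x : ℝ) : ℝ :=
  Real.sqrt (2 / L) * Real.sin (Real.pi * (k + 1) * x / L)

/-- The semigroup `S(t)f := Σ_j e^{(α−λ_j)t}⟨f, e_j⟩ e_j`. -/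
noncomputable def Sop {H : Type*} [NormedAddCommGroup H] [InnerProductSpace ℝ H]
    (e : ℕ → H) (lam : ℕ → ℝ) (α : ℝ) (t : ℝ) (f : H) : H :=
  ∑' j, (Real.exp ((α - lam j) * t) * ⟪f, e j⟫) • e j

/-!
Put `μ_j = λ_j - α > 0`. Expanding both copies of `S(t)f` and integrating in time gives
`⟨V∞ f, f⟩ = σ² ∑_{i,j} ⟨f, e_i⟩⟨f, e_j⟩ A_ij / (μ_i + μ_j)` with `A_ij = ⟨Q e_i, e_j⟩`. As `ε → 0⁺`
the pairings `⟨f_ε, e_j⟩`, which are averages of `e_j` around `x₀`, converge to `e_j(x₀)` and stay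
bounded by `M`, so dominated convergence for series gives the limit once `A_ij / (μ_i + μ_j)` is
absolutely summable. Weighted AM-GM yields `|A_ij| / (μ_i + μ_j) ≤ μ_i^{-2/3} |A_ij| μ_j^{-1/3}`.
By Bessel's inequality each row of `A` has square sum at most `‖Q‖²`, so the right-hand side is
summable as soon as `∑ μ_j^{-2/3} < ∞`, which quadratic growth of `λ_j` guarantees.
-/

open scoped Topology

section RealLemmas

lemma inv_add_le_rpow_neg_mul_rpow_neg {x y θ : ℝ} (hx : 0 < x) (hy : 0 < y) (hθ₀ : 0 ≤ θ)
    (hθ₁ : θ ≤ 1) : (x + y)⁻¹ ≤ x ^ (-θ) * y ^ (-(1 - θ)) := by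
  have amgm : x ^ θ * y ^ (1 - θ) ≤ x + y :=
    calc x ^ θ * y ^ (1 - θ) ≤ θ * x + (1 - θ) * y :=
          Real.geom_mean_le_arith_mean2_weighted hθ₀ (sub_nonneg.2 hθ₁) hx.le hy.le (by ring)
      _ ≤ x + y := by nlinarith
  rw [Real.rpow_neg hx.le, Real.rpow_neg hy.le, ← mul_inv]
  gcongr

lemma summable_rpow_neg_of_quadratic_growth {lam : ℕ → ℝ} {c r : ℝ} (hc : 0 < c) (hr : 1 / 2 < r)
    (hgrow : ∀ j : ℕ, c * ((j : ℝ) + 1) ^ 2 ≤ lam j) (α : ℝ) :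
    Summable fun j ↦ (lam j - α) ^ (-r) := by
  have hsum : Summable fun j : ℕ ↦ (c / 2) ^ (-r) * ((j : ℝ) + 1) ^ (-(2 * r)) := by
    have := (summable_nat_add_iff 1).2 (Real.summable_nat_rpow (p := -(2 * r)).2 (by linarith))
    exact Summable.mul_left _ (by exact_mod_cast this)
  have hlarge : ∀ᶠ j : ℕ in atTop, 2 * α / c ≤ j :=
    tendsto_natCast_atTop_atTop.eventually_ge_atTop _
  refine hsum.of_norm_bounded_eventually_nat ?_
  filter_upwards [hlarge] with j hj
  have hj₁ : (1 : ℝ) ≤ (j : ℝ) + 1 := by simp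
  have hα : 2 * α ≤ c * ((j : ℝ) + 1) ^ 2 := by
    rw [div_le_iff₀' hc] at hj
    exact hj.trans (by gcongr; nlinarith)
  have hhalf : c / 2 * ((j : ℝ) + 1) ^ 2 ≤ lam j - α := by linarith [hgrow j]
  have hpos : 0 < c / 2 * ((j : ℝ) + 1) ^ 2 := by positivity
  rw [Real.norm_of_nonneg (Real.rpow_nonneg (hpos.le.trans hhalf) _)]
  calc (lam j - α) ^ (-r) ≤ (c / 2 * ((j : ℝ) + 1) ^ 2) ^ (-r) :=
        Real.rpow_le_rpow_of_nonpos hpos hhalf (by linarith)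
    _ = (c / 2) ^ (-r) * ((j : ℝ) + 1) ^ (-(2 * r)) := by
        rw [Real.mul_rpow (by positivity) (by positivity), ← Real.rpow_natCast_mul (by positivity)]
        norm_num

variable {ι β : Type*} {k : ι × ι → ℝ} {M : ℝ}

lemma norm_mul_mul_le_of_abs_le {a : ι → ℝ} (ha : ∀ i, |a i| ≤ M) (p : ι × ι) :
    ‖a p.1 * a p.2 * k p‖ ≤ M * M * ‖k p‖ := by
  have hM : 0 ≤ M := (abs_nonneg _).trans (ha p.1)
  rw [norm_mul, norm_mul]
  gcongr
  exacts [ha p.1, ha p.2]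

lemma summable_mul_mul_of_abs_le {a : ι → ℝ} (hk : Summable k) (ha : ∀ i, |a i| ≤ M) :
    Summable fun p : ι × ι ↦ a p.1 * a p.2 * k p :=
  .of_norm_bounded (hk.norm.mul_left (M * M)) (norm_mul_mul_le_of_abs_le ha)

lemma tendsto_tsum_mul_mul_of_abs_le {l : Filter β} {g : β → ι → ℝ} {a : ι → ℝ} (hk : Summable k)
    (hbd : ∀ᶠ x in l, ∀ i, |g x i| ≤ M) (hlim : ∀ i, Tendsto (g · i) l (𝓝 (a i))) :
    Tendsto (fun x ↦ ∑' p : ι × ι, g x p.1 * g x p.2 * k p) l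
      (𝓝 (∑' p : ι × ι, a p.1 * a p.2 * k p)) :=
  tendsto_tsum_of_dominated_convergence (hk.norm.mul_left (M * M))
    (fun p ↦ ((hlim p.1).mul (hlim p.2)).mul_const _)
    (hbd.mono fun _ hx ↦ norm_mul_mul_le_of_abs_le hx)

end RealLemmas

section Hilbert

variable {H : Type*} [NormedAddCommGroup H] [InnerProductSpace ℝ H] {ι κ : Type*}

lemma hasSum_inner_prod {x : ι → H} {y : κ → H} {u v : H} (hx : HasSum x u) (hy : HasSum y v)
    (hxy : Summable fun p : ι × κ ↦ ⟪x p.1, y p.2⟫) :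
    HasSum (fun p : ι × κ ↦ ⟪x p.1, y p.2⟫) ⟪u, v⟫ := by
  have hrow (i : ι) : HasSum (fun j ↦ ⟪x i, y j⟫) ⟪x i, v⟫ := hy.mapL (innerSL ℝ (x i))
  have hcol : HasSum (fun i ↦ ⟪x i, v⟫) ⟪u, v⟫ := by
    simpa only [innerSL_apply_apply, real_inner_comm v] using hx.mapL (innerSL ℝ v)
  exact (hxy.hasSum.prod_fiberwise hrow).unique hcol ▸ hxy.hasSum

lemma hasSum_eigenvalue_mul_inner_mul_inner (b : HilbertBasis κ ℝ H) {Q : H →L[ℝ] H} {q : κ → ℝ}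
    (hQ : ∀ n, Q (b n) = q n • b n) (u v : H) :
    HasSum (fun n ↦ q n * ⟪u, b n⟫ * ⟪v, b n⟫) ⟪Q u, v⟫ := by
  have hQu := ((b.hasSum_repr u).mapL Q).mapL (innerSL ℝ v)
  rw [innerSL_apply_apply, real_inner_comm] at hQu
  refine hQu.congr_fun fun n ↦ ?_
  rw [map_smul, hQ, innerSL_apply_apply, inner_smul_right, inner_smul_right, b.repr_apply_apply,
    real_inner_comm u]
  ring

section Orthonormal

variable {e : ι → H} (he : Orthonormal ℝ e)
include he

lemma abs_inner_le_norm_of_orthonormal (f : H) (i : ι) : |⟪f, e i⟫| ≤ ‖f‖ := by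
  simpa [he.norm_eq_one i] using abs_real_inner_le_norm f (e i)

lemma summable_mul_abs_inner_mul_abs {x : κ → H} {C : ℝ} {u : κ → ℝ} {w : ι → ℝ}
    (hx : ∀ k, ‖x k‖ ≤ C) (hu₀ : ∀ k, 0 ≤ u k) (hu : Summable u) (hw : Summable fun i ↦ w i ^ 2) :
    Summable fun p : κ × ι ↦ u p.1 * (|⟪e p.2, x p.1⟫| * |w p.2|) := by
  have hbessel (k : κ) : Summable fun i ↦ ⟪e i, x k⟫ ^ 2 := by
    simpa using he.inner_products_summable (x := x k)
  have hrow (k : κ) : ∑' i, ⟪e i, x k⟫ ^ 2 ≤ C ^ 2 := by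
    have := he.tsum_inner_products_le (x := x k)
    simp only [Real.norm_eq_abs, sq_abs] at this
    exact this.trans (by gcongr; exact hx k)
  have hcoeff : Summable fun p : κ × ι ↦ u p.1 * ⟪e p.2, x p.1⟫ ^ 2 := by
    refine (summable_prod_of_nonneg fun p ↦ mul_nonneg (hu₀ p.1) (sq_nonneg _)).2
      ⟨fun k ↦ (hbessel k).mul_left (u k), ?_⟩
    simp only [tsum_mul_left]
    exact .of_nonneg_of_le (fun k ↦ mul_nonneg (hu₀ k) (tsum_nonneg fun i ↦ sq_nonneg ⟪e i, x k⟫))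
      (fun k ↦ mul_le_mul_of_nonneg_left (hrow k) (hu₀ k)) (hu.mul_right (C ^ 2))
  have hweight : Summable fun p : κ × ι ↦ u p.1 * w p.2 ^ 2 :=
    hu.mul_of_nonneg hw hu₀ fun _ ↦ sq_nonneg _
  refine .of_nonneg_of_le (fun p ↦ mul_nonneg (hu₀ _) (by positivity)) (fun p ↦ ?_)
    (hcoeff.add hweight)
  rw [← mul_add]
  refine mul_le_mul_of_nonneg_left ?_ (hu₀ _)
  nlinarith [sq_nonneg (|⟪e p.2, x p.1⟫| - |w p.2|), sq_abs ⟪e p.2, x p.1⟫, sq_abs (w p.2)]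

/- The exponents `2/3` and `1/3` balance the two demands of `summable_mul_abs_inner_mul_abs`:
`μ ^ (-θ)` summable and `μ ^ (-(1 - θ))` square summable. -/
lemma summable_inner_div_add (Q : H →L[ℝ] H) {μ : ι → ℝ} (hμ : ∀ i, 0 < μ i)
    (hμ_sum : Summable fun i ↦ μ i ^ (-(2 / 3) : ℝ)) :
    Summable fun p : ι × ι ↦ ⟪Q (e p.1), e p.2⟫ / (μ p.1 + μ p.2) := by
  have hQ (i : ι) : ‖Q (e i)‖ ≤ ‖Q‖ := by simpa [he.norm_eq_one i] using Q.le_opNorm (e i)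
  have hsq : Summable fun i ↦ (μ i ^ (-(1 - 2 / 3) : ℝ)) ^ 2 := by
    refine hμ_sum.congr fun i ↦ ?_
    rw [← Real.rpow_mul_natCast (hμ i).le]
    norm_num
  refine .of_norm_bounded (summable_mul_abs_inner_mul_abs he hQ
    (fun i ↦ Real.rpow_nonneg (hμ i).le _) hμ_sum hsq) fun p ↦ ?_
  have hadd : 0 < μ p.1 + μ p.2 := add_pos (hμ _) (hμ _)
  calc ‖⟪Q (e p.1), e p.2⟫ / (μ p.1 + μ p.2)‖
      = |⟪e p.2, Q (e p.1)⟫| * (μ p.1 + μ p.2)⁻¹ := by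
        rw [norm_div, Real.norm_of_nonneg hadd.le, Real.norm_eq_abs, real_inner_comm,
          div_eq_mul_inv]
    _ ≤ |⟪e p.2, Q (e p.1)⟫| * (μ p.1 ^ (-(2 / 3) : ℝ) * μ p.2 ^ (-(1 - 2 / 3) : ℝ)) := by
        gcongr
        exact inv_add_le_rpow_neg_mul_rpow_neg (hμ _) (hμ _) (by norm_num) (by norm_num)
    _ = μ p.1 ^ (-(2 / 3) : ℝ) * (|⟪e p.2, Q (e p.1)⟫| * |μ p.2 ^ (-(1 - 2 / 3) : ℝ)|) := by
        rw [abs_of_nonneg (Real.rpow_nonneg (hμ p.2).le _)]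
        ring

lemma summable_smul_of_abs_le_inner [CompleteSpace H] {a : ι → ℝ} {f : H}
    (ha : ∀ i, |a i| ≤ |⟪f, e i⟫|) : Summable fun i ↦ a i • e i := by
  have hsq : Summable fun i ↦ ‖a i‖ ^ 2 := by
    refine .of_nonneg_of_le (fun i ↦ by positivity) (fun i ↦ ?_)
      (he.inner_products_summable (x := f))
    rw [real_inner_comm]
    exact pow_le_pow_left₀ (norm_nonneg _) (ha i) 2
  simpa using (he.orthogonalFamily.summable_iff_norm_sq_summable a).2 hsq

end Orthonormal

/-- The matrix `⟪Q e_i, e_j⟫ / (λ_i + λ_j - 2α)` of the form `V∞ / σ²` in the family `e`, with the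
time integral already evaluated. It is indexed by pairs so as to be summed over `ι × ι`. -/
noncomputable def covarianceCoeff (Q : H →L[ℝ] H) (e : ι → H) (lam : ι → ℝ) (α : ℝ)
    (p : ι × ι) : ℝ :=
  ⟪Q (e p.1), e p.2⟫ / (lam p.1 + lam p.2 - 2 * α)

lemma summable_covarianceCoeff {e : ι → H} (he : Orthonormal ℝ e) (Q : H →L[ℝ] H) {lam : ι → ℝ}
    {α : ℝ} (hα : ∀ i, α < lam i) (hlam : Summable fun i ↦ (lam i - α) ^ (-(2 / 3) : ℝ)) :
    Summable (covarianceCoeff Q e lam α) :=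
  (summable_inner_div_add he Q (fun i ↦ sub_pos.2 (hα i)) hlam).congr fun p ↦ by
    rw [covarianceCoeff]
    ring_nf

section Semigroup

variable {e : ℕ → H} (he : Orthonormal ℝ e) {lam : ℕ → ℝ} {α : ℝ} [CompleteSpace H]
include he

lemma hasSum_Sop (hα : ∀ j, α ≤ lam j) {t : ℝ} (ht : 0 ≤ t) (f : H) :
    HasSum (fun j ↦ (Real.exp ((α - lam j) * t) * ⟪f, e j⟫) • e j) (Sop e lam α t f) := by
  refine (summable_smul_of_abs_le_inner he (f := f) fun j ↦ ?_).hasSum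
  rw [abs_mul, Real.abs_exp]
  exact mul_le_of_le_one_left (abs_nonneg _)
    (Real.exp_le_one_iff.2 (mul_nonpos_of_nonpos_of_nonneg (sub_nonpos.2 (hα j)) ht))

lemma hasSum_inner_apply_Sop (hα : ∀ j, α < lam j) {Q : H →L[ℝ] H}
    (hQ : Summable (covarianceCoeff Q e lam α)) {t : ℝ} (ht : 0 < t) (f : H) :
    HasSum (fun p : ℕ × ℕ ↦ ⟪f, e p.1⟫ * ⟪f, e p.2⟫ * ⟪Q (e p.1), e p.2⟫
        * Real.exp (-(lam p.1 + lam p.2 - 2 * α) * t))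
      ⟪Q (Sop e lam α t f), Sop e lam α t f⟫ := by
  have hS := hasSum_Sop he (fun j ↦ (hα j).le) ht.le f
  have hterm (p : ℕ × ℕ) :
      ⟪Q ((Real.exp ((α - lam p.1) * t) * ⟪f, e p.1⟫) • e p.1),
        (Real.exp ((α - lam p.2) * t) * ⟪f, e p.2⟫) • e p.2⟫
      = ⟪f, e p.1⟫ * ⟪f, e p.2⟫ * ⟪Q (e p.1), e p.2⟫
        * Real.exp (-(lam p.1 + lam p.2 - 2 * α) * t) := by
    rw [map_smul, real_inner_smul_left, real_inner_smul_right,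
      show -(lam p.1 + lam p.2 - 2 * α) * t = (α - lam p.1) * t + (α - lam p.2) * t by ring,
      Real.exp_add]
    ring
  have hexp {m : ℝ} (hm : 0 < m) : Real.exp (-m * t) ≤ m⁻¹ * t⁻¹ := by
    rw [neg_mul, Real.exp_neg, ← mul_inv]
    gcongr
    linarith [Real.add_one_le_exp (m * t)]
  have hsum := (summable_mul_mul_of_abs_le hQ (abs_inner_le_norm_of_orthonormal he f)).norm
  refine (hasSum_inner_prod (hS.mapL Q) hS ?_).congr_fun fun p ↦ (hterm p).symm
  simp only [hterm]
  refine .of_norm_bounded (hsum.mul_right t⁻¹) fun p ↦ ?_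
  have hm : 0 < lam p.1 + lam p.2 - 2 * α := by linarith [hα p.1, hα p.2]
  rw [covarianceCoeff, ← mul_div_assoc, norm_mul, norm_div, Real.norm_of_nonneg hm.le,
    Real.norm_of_nonneg (Real.exp_pos _).le, div_eq_mul_inv, mul_assoc _ _ t⁻¹]
  exact mul_le_mul_of_nonneg_left (hexp hm) (norm_nonneg _)

theorem hasSum_integral_inner_apply_Sop (hα : ∀ j, α < lam j) {Q : H →L[ℝ] H}
    (hQ : Summable (covarianceCoeff Q e lam α)) (f : H) :
    HasSum (fun p : ℕ × ℕ ↦ ⟪f, e p.1⟫ * ⟪f, e p.2⟫ * covarianceCoeff Q e lam α p)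
      (∫ t in Set.Ioi (0 : ℝ), ⟪Q (Sop e lam α t f), Sop e lam α t f⟫) := by
  have hrate (p : ℕ × ℕ) : -(lam p.1 + lam p.2 - 2 * α) < 0 := by linarith [hα p.1, hα p.2]
  have hexp (p : ℕ × ℕ) (C : ℝ) :
      ∫ t in Set.Ioi (0 : ℝ), C * Real.exp (-(lam p.1 + lam p.2 - 2 * α) * t)
        = C / (lam p.1 + lam p.2 - 2 * α) := by
    rw [integral_const_mul, integral_exp_mul_Ioi (hrate p), mul_zero, Real.exp_zero, neg_div_neg_eq,
      mul_one_div]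
  have hsum := (summable_mul_mul_of_abs_le hQ (abs_inner_le_norm_of_orthonormal he f)).norm
  have hswap := hasSum_integral_of_summable_integral_norm (μ := volume.restrict (Set.Ioi (0 : ℝ)))
    (F := fun (p : ℕ × ℕ) t ↦ ⟪f, e p.1⟫ * ⟪f, e p.2⟫ * ⟪Q (e p.1), e p.2⟫
      * Real.exp (-(lam p.1 + lam p.2 - 2 * α) * t))
    (fun p ↦ (integrableOn_exp_mul_Ioi (hrate p) 0).const_mul _)
    (hsum.congr fun p ↦ by
      simp only [norm_mul _ (Real.exp _), Real.norm_of_nonneg (Real.exp_pos _).le]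
      rw [hexp, covarianceCoeff, ← mul_div_assoc, norm_div,
        Real.norm_of_nonneg (neg_neg_iff_pos.1 (hrate p)).le])
  simp only [hexp, mul_div_assoc] at hswap
  rwa [setIntegral_congr_fun measurableSet_Ioi fun t ht ↦
    (hasSum_inner_apply_Sop he hα hQ ht f).tsum_eq] at hswap

end Semigroup

theorem stmt_5_general [CompleteSpace H] {e : ℕ → H} (he : Orthonormal ℝ e)
    (b : HilbertBasis κ ℝ H) {lam : ℕ → ℝ} {α : ℝ} (hα : ∀ j, α < lam j)
    (hlam : Summable fun j ↦ (lam j - α) ^ (-(2 / 3) : ℝ))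
    {Q : H →L[ℝ] H} {q : κ → ℝ} (hQ : ∀ n, Q (b n) = q n • b n)
    {l : Filter ι} [l.NeBot] {F : ι → H} {a : ℕ → ℝ} {M : ℝ}
    (hF_bd : ∀ᶠ i in l, ∀ j, |⟪F i, e j⟫| ≤ M)
    (hF_lim : ∀ j, Tendsto (fun i ↦ ⟪F i, e j⟫) l (𝓝 (a j))) (σ : ℝ) :
    (∀ j₁ j₂, Summable fun n ↦ q n * ⟪e j₁, b n⟫ * ⟪e j₂, b n⟫) ∧
    (∀ j₁, Summable fun j₂ ↦ a j₁ * a j₂ / (lam j₁ + lam j₂ - 2 * α)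
        * ∑' n, q n * ⟪e j₁, b n⟫ * ⟪e j₂, b n⟫) ∧
    Summable (fun j₁ ↦ ∑' j₂, a j₁ * a j₂ / (lam j₁ + lam j₂ - 2 * α)
        * ∑' n, q n * ⟪e j₁, b n⟫ * ⟪e j₂, b n⟫) ∧
    Tendsto (fun i ↦ σ ^ 2 * ∫ t in Set.Ioi (0 : ℝ),
        ⟪Q (Sop e lam α t (F i)), Sop e lam α t (F i)⟫) l
      (𝓝 (σ ^ 2 * ∑' j₁, ∑' j₂, a j₁ * a j₂ / (lam j₁ + lam j₂ - 2 * α)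
        * ∑' n, q n * ⟪e j₁, b n⟫ * ⟪e j₂, b n⟫)) := by
  have hA := fun u v ↦ hasSum_eigenvalue_mul_inner_mul_inner b hQ u v
  have hcoeff := summable_covarianceCoeff he Q hα hlam
  have ha (j : ℕ) : |a j| ≤ M := le_of_tendsto (hF_lim j).abs (hF_bd.mono fun _ h ↦ h j)
  have hsum := summable_mul_mul_of_abs_le hcoeff ha
  have hterm (j₁ j₂ : ℕ) : a j₁ * a j₂ / (lam j₁ + lam j₂ - 2 * α)
      * ∑' n, q n * ⟪e j₁, b n⟫ * ⟪e j₂, b n⟫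
      = a j₁ * a j₂ * covarianceCoeff Q e lam α (j₁, j₂) := by
    rw [(hA _ _).tsum_eq, covarianceCoeff, div_mul_eq_mul_div, mul_div_assoc]
  simp only [hterm]
  refine ⟨fun _ _ ↦ (hA _ _).summable, hsum.prod_factor, hsum.prod, Tendsto.const_mul _ ?_⟩
  rw [← hsum.tsum_prod]
  exact (tendsto_tsum_mul_mul_of_abs_le hcoeff hF_bd hF_lim).congr fun i ↦
    (hasSum_integral_inner_apply_Sop he hα hcoeff (F i)).tsum_eq

end Hilbert

section Averaging

variable {X : Type*} [MeasurableSpace X] {μ : Measure X}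

/-- `u` is the `L²` class of the normalized indicator `μ(s)⁻¹ 𝟙_s`, where `s` has positive finite
measure, so that pairing with `u` is averaging over `s`. -/
structure IsAveragingKernel (μ : Measure X) (s : Set X) (u : Lp ℝ 2 μ) : Prop where
  measurableSet : MeasurableSet s
  measure_ne_zero : μ s ≠ 0
  measure_ne_top : μ s ≠ ⊤
  ae_eq : u =ᵐ[μ] s.indicator fun _ ↦ (μ.real s)⁻¹

namespace IsAveragingKernel

variable {s : Set X} {u : Lp ℝ 2 μ}

lemma inner_eq_setAverage (hu : IsAveragingKernel μ s u) (v : Lp ℝ 2 μ) :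
    ⟪u, v⟫ = ⨍ x in s, v x ∂μ := by
  have hinner : (fun x ↦ ⟪u x, v x⟫) =ᵐ[μ] s.indicator fun x ↦ (μ.real s)⁻¹ * v x := by
    filter_upwards [hu.ae_eq] with x hx
    by_cases hxs : x ∈ s <;> simp [hx, hxs, mul_comm]
  rw [L2.inner_def, integral_congr_ae hinner, integral_indicator hu.measurableSet,
    integral_const_mul, setAverage_eq, smul_eq_mul]

lemma inner_mem_of_convex (hu : IsAveragingKernel μ s u) {v : Lp ℝ 2 μ} {S : Set ℝ}
    (hS : Convex ℝ S) (hSc : IsClosed S) (hv : ∀ᵐ x ∂μ, x ∈ s → v x ∈ S) : ⟪u, v⟫ ∈ S := by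
  rw [hu.inner_eq_setAverage]
  exact hS.set_average_mem hSc hu.measure_ne_zero hu.measure_ne_top
    ((ae_restrict_iff' hu.measurableSet).2 hv)
    (integrableOn_Lp_of_measure_ne_top v (by norm_num) hu.measure_ne_top)

lemma abs_inner_le (hu : IsAveragingKernel μ s u) {v : Lp ℝ 2 μ} {g : X → ℝ} {M : ℝ}
    (hv : v =ᵐ[μ] g) (hg : ∀ᵐ x ∂μ, |g x| ≤ M) : |⟪u, v⟫| ≤ M := by
  rw [← Real.norm_eq_abs, ← mem_closedBall_zero_iff]
  refine hu.inner_mem_of_convex (convex_closedBall _ _) Metric.isClosed_closedBall ?_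
  filter_upwards [hv, hg] with x hx hgx _
  rwa [hx, mem_closedBall_zero_iff, Real.norm_eq_abs]

lemma tendsto_inner [TopologicalSpace X] {ι : Type*} {l : Filter ι} {s : ι → Set X}
    {F : ι → Lp ℝ 2 μ} {x₀ : X} (hF : ∀ᶠ i in l, IsAveragingKernel μ (s i) (F i))
    (hs : Tendsto s l (𝓝 x₀).smallSets) {v : Lp ℝ 2 μ} {g : X → ℝ} (hv : v =ᵐ[μ] g)
    (hg : ContinuousAt g x₀) : Tendsto (fun i ↦ ⟪F i, v⟫) l (𝓝 (g x₀)) := by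
  refine Metric.nhds_basis_closedBall.tendsto_right_iff.2 fun δ hδ ↦ ?_
  have hsub : ∀ᶠ i in l, s i ⊆ g ⁻¹' Metric.closedBall (g x₀) δ :=
    tendsto_smallSets_iff.1 hs _ (hg (Metric.closedBall_mem_nhds _ hδ))
  filter_upwards [hF, hsub] with i hFi hsi
  refine hFi.inner_mem_of_convex (convex_closedBall _ _) Metric.isClosed_closedBall ?_
  filter_upwards [hv] with x hx hxs
  rw [hx]
  exact hsi hxs

end IsAveragingKernel

lemma isAveragingKernel_of_ae_eq_indicator_Icc {L x₀ ε : ℝ} {u : HL L} (hε : 0 < ε)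
    (hsub : Metric.closedBall x₀ (ε / 2) ⊆ Set.Icc 0 L)
    (hu : u =ᵐ[volume.restrict (Set.Icc 0 L)]
      (Set.Icc (x₀ - ε / 2) (x₀ + ε / 2)).indicator fun _ ↦ 1 / ε) :
    IsAveragingKernel (volume.restrict (Set.Icc 0 L)) (Metric.closedBall x₀ (ε / 2)) u := by
  have hvol : volume.restrict (Set.Icc 0 L) (Metric.closedBall x₀ (ε / 2)) = ENNReal.ofReal ε := by
    rw [Measure.restrict_eq_self _ hsub, Real.volume_closedBall, mul_div_cancel₀ _ two_ne_zero]
  refine ⟨measurableSet_closedBall, by simpa [hvol], by simp [hvol], ?_⟩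
  rwa [measureReal_def, hvol, ENNReal.toReal_ofReal hε.le, Real.closedBall_eq_Icc, ← one_div]

lemma tendsto_closedBall_half_smallSets (x₀ : ℝ) :
    Tendsto (fun ε : ℝ ↦ Metric.closedBall x₀ (ε / 2)) (𝓝[>] 0) (𝓝 x₀).smallSets :=
  (tendsto_closedBall_smallSets x₀).comp <|
    (Continuous.tendsto' (by fun_prop) 0 0 (zero_div 2)).mono_left nhdsWithin_le_nhds

lemma eventually_isAveragingKernel_closedBall {L x₀ : ℝ} (hx₀ : x₀ ∈ Set.Ioo 0 L) {F : ℝ → HL L}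
    (hF : ∀ ε > 0, F ε =ᵐ[volume.restrict (Set.Icc 0 L)]
      (Set.Icc (x₀ - ε / 2) (x₀ + ε / 2)).indicator fun _ ↦ 1 / ε) :
    ∀ᶠ ε in 𝓝[>] 0, IsAveragingKernel (volume.restrict (Set.Icc 0 L))
      (Metric.closedBall x₀ (ε / 2)) (F ε) := by
  filter_upwards [self_mem_nhdsWithin, tendsto_smallSets_iff.1
    (tendsto_closedBall_half_smallSets x₀) _ (Icc_mem_nhds hx₀.1 hx₀.2)] with ε hε hsub
  exact isAveragingKernel_of_ae_eq_indicator_Icc hε hsub (hF ε hε)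

end Averaging

/-- Corollary 3.3 of the paper (the pointwise early-warning sign): with
`f_ε = (1/ε)·𝟙_{[x₀−ε/2, x₀+ε/2]}` one has
`lim_{ε→0⁺}⟨V∞ f_ε, f_ε⟩ = σ² Σ_{j₁}Σ_{j₂} e_{j₁}(x₀)e_{j₂}(x₀)/(λ_{j₁}+λ_{j₂}−2α)
· Σ_n q_n⟨e_{j₁},b_n⟩⟨e_{j₂},b_n⟩`, all series converging. -/
theorem stmt_5 (L : ℝ) (hL : 0 < L)
    (e b : HilbertBasis ℕ ℝ (HL L))
    -- continuous representatives of the `e_j`, uniformly bounded by `M`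
    (ec : ℕ → ℝ → ℝ) (hec_cont : ∀ j, Continuous (ec j))
    (hec_ae : ∀ j, ⇑(e j) =ᵐ[volume.restrict (Set.Icc (0:ℝ) L)] ec j)
    (M : ℝ) (hM : 0 < M) (hec_bd : ∀ j, ∀ x ∈ Set.Icc (0:ℝ) L, |ec j x| ≤ M)
    -- `‖e_j − e_j'‖_∞ ≤ c/j` and `λ_j ≥ c₁ j²`
    (c c₁ : ℝ) (hc : 0 < c) (hc₁ : 0 < c₁)
    (lam : ℕ → ℝ)
    (hclose : ∀ j, ∀ x ∈ Set.Icc (0:ℝ) L, |ec j x - sineEF L j x| ≤ c / (j + 1))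
    (hgrow : ∀ j : ℕ, c₁ * ((j : ℝ) + 1) ^ 2 ≤ lam j)
    (hlam : ∀ j, lam 0 ≤ lam j)
    (α : ℝ) (hα : α < lam 0) (σ : ℝ) (hσ : 0 < σ)
    (Q : (HL L) →L[ℝ] (HL L)) (hQ_sa : ∀ f h : HL L, ⟪Q f, h⟫ = ⟪f, Q h⟫)
    (q : ℕ → ℝ) (qstar : ℝ)
    (hq_nonneg : ∀ n, 0 ≤ q n) (hq_bd : ∀ n, q n ≤ qstar)
    (hQ_eig : ∀ n, Q (b n) = q n • b n)
    -- `b_n = e_n'` for all `n > D`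
    (D : ℕ) (hD : 1 ≤ D)
    (hb_sine : ∀ n, D < n + 1 →
      ⇑(b n) =ᵐ[volume.restrict (Set.Icc (0:ℝ) L)] sineEF L n)
    (x₀ : ℝ) (hx₀ : x₀ ∈ Set.Ioo (0:ℝ) L)
    -- `F ε` is the `L²`-class of `f_ε = (1/ε)·𝟙_{[x₀−ε/2, x₀+ε/2]}`
    (F : ℝ → HL L)
    (hF : ∀ ε : ℝ, 0 < ε → ⇑(F ε) =ᵐ[volume.restrict (Set.Icc (0:ℝ) L)]
      (Set.Icc (x₀ - ε / 2) (x₀ + ε / 2)).indicator (fun _ => 1 / ε)) :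
    (∀ j₁ j₂ : ℕ, Summable (fun n => q n * ⟪(e j₁ : HL L), b n⟫ * ⟪(e j₂ : HL L), b n⟫)) ∧
    (∀ j₁ : ℕ, Summable (fun j₂ => ec j₁ x₀ * ec j₂ x₀ / (lam j₁ + lam j₂ - 2 * α)
        * ∑' n, q n * ⟪(e j₁ : HL L), b n⟫ * ⟪(e j₂ : HL L), b n⟫)) ∧
    Summable (fun j₁ => ∑' j₂, ec j₁ x₀ * ec j₂ x₀ / (lam j₁ + lam j₂ - 2 * α)
        * ∑' n, q n * ⟪(e j₁ : HL L), b n⟫ * ⟪(e j₂ : HL L), b n⟫) ∧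
    Tendsto (fun ε : ℝ => σ ^ 2 * ∫ t in Set.Ioi (0:ℝ),
        ⟪Q (Sop (fun j => e j) lam α t (F ε)), Sop (fun j => e j) lam α t (F ε)⟫)
      (nhdsWithin 0 (Set.Ioi 0))
      (nhds (σ ^ 2 * ∑' j₁, ∑' j₂, ec j₁ x₀ * ec j₂ x₀ / (lam j₁ + lam j₂ - 2 * α)
        * ∑' n, q n * ⟪(e j₁ : HL L), b n⟫ * ⟪(e j₂ : HL L), b n⟫)) := by
  have hker := eventually_isAveragingKernel_closedBall hx₀ hF
  exact stmt_5_general e.orthonormal b (fun j ↦ hα.trans_le (hlam j))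
    (summable_rpow_neg_of_quadratic_growth hc₁ (by norm_num) hgrow α) hQ_eig
    (hker.mono fun ε hε j ↦
      hε.abs_inner_le (hec_ae j) (ae_restrict_of_forall_mem measurableSet_Icc (hec_bd j)))
    (fun j ↦ IsAveragingKernel.tendsto_inner hker (tendsto_closedBall_half_smallSets x₀)
      (hec_ae j) (hec_cont j).continuousAt) σ
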